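/- arXiv:2210.12405 — 5 statements merged into one kernel-verified Lean document; each statement's English description precedes it below -/
import Mathlib

section
/- Let A be a d-dimensional (0,1)-matrix of order n, let Λ = (λ_{i,j}) be an optimal hyperplane cover of A, and let K = (k_α) be a polyplex of maximum weight in A. Then: (1) for every index α, if k_α > 0 then Σ_{i ∈ Fin d} λ_{i, α_i} = 1; and (2) for every i ∈ Fin d and j ∈ Fin n, if λ_{i,j} > 0 then the sum of the entries of K over the hyperplane Γ_{i,j} equals 1. -/
open Finset

/-- The sum of the entries of `k` over the hyperplane `Γ_{i,j}`. -/
def hypSum {d n : ℕ} (k : (Fin d → Fin n) → ℝ) (i : Fin d) (j : Fin n) : ℝ :=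
  ∑ α ∈ Finset.univ.filter (fun α : Fin d → Fin n => α i = j), k α

/-- `k` is a polyplex of weight `W` in the `d`-dimensional (0,1)-matrix `A` of order `n`. -/
def IsPolyplex {d n : ℕ} (A : (Fin d → Fin n) → Bool) (k : (Fin d → Fin n) → ℝ) (W : ℝ) : Prop :=
  (∀ α, 0 ≤ k α) ∧ (∀ α, A α = false → k α = 0) ∧
  (∀ i j, hypSum k i j ≤ 1) ∧ (∑ α, k α) = W

/-- `k` is a polydiagonal in `A`: a nonnegative weighting of the support whose sum over
every hyperplane equals `1`. -/
def IsPolydiagonal {d n : ℕ} (A : (Fin d → Fin n) → Bool) (k : (Fin d → Fin n) → ℝ) : Prop :=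
  (∀ α, 0 ≤ k α) ∧ (∀ α, A α = false → k α = 0) ∧ (∀ i j, hypSum k i j = 1)

def HasPolydiagonal {d n : ℕ} (A : (Fin d → Fin n) → Bool) : Prop :=
  ∃ k, IsPolydiagonal A k

/-- The matrix obtained from `A` by additionally setting the entry at `β` to `1`. -/
def addEntry {d n : ℕ} (A : (Fin d → Fin n) → Bool) (β : Fin d → Fin n) :
    (Fin d → Fin n) → Bool :=
  fun α => if α = β then true else A α

/-- `A` is extremal: it has no polydiagonal, and adding any entry creates one. -/
def IsExtremal {d n : ℕ} (A : (Fin d → Fin n) → Bool) : Prop :=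
  ¬ HasPolydiagonal A ∧ ∀ β, A β = false → HasPolydiagonal (addEntry A β)

/-- `Λ` is a hyperplane cover of `A`. -/
def IsCover {d n : ℕ} (A : (Fin d → Fin n) → Bool) (Λ : Fin d → Fin n → ℝ) : Prop :=
  (∀ i j, 0 ≤ Λ i j) ∧ ∀ α, A α = true → 1 ≤ ∑ i, Λ i (α i)

/-- The weight of a hyperplane cover. -/
def coverWeight {d n : ℕ} (Λ : Fin d → Fin n → ℝ) : ℝ := ∑ i, ∑ j, Λ i j

/-- `Λ` is an optimal hyperplane cover of `A`: a cover of minimum weight. -/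
def IsOptimalCover {d n : ℕ} (A : (Fin d → Fin n) → Bool) (Λ : Fin d → Fin n → ℝ) : Prop :=
  IsCover A Λ ∧ ∀ Λ', IsCover A Λ' → coverWeight Λ ≤ coverWeight Λ'

/-- `A` is a threshold matrix. -/
def IsThreshold {d n : ℕ} (A : (Fin d → Fin n) → Bool) : Prop :=
  ∃ Λ : Fin d → Fin n → ℝ, (∀ i j, 0 ≤ Λ i j) ∧
    ∀ α, (A α = true ↔ 1 ≤ ∑ i, Λ i (α i))

/-- `A` and `B` are equivalent: `B` is obtained from `A` by permuting directions and
permuting parallel hyperplanes, i.e. `B(α) = A(β)` where `β (π i) = σ i (α i)`. -/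
def MatEquiv {d n : ℕ} (A B : (Fin d → Fin n) → Bool) : Prop :=
  ∃ (π : Equiv.Perm (Fin d)) (σ : Fin d → Equiv.Perm (Fin n)),
    ∀ α, B α = A (fun j => σ (π.symm j) (α (π.symm j)))

/-- The rate of the hyperplane `Γ_{i,j}` of `A`: the number of ones it contains. -/
def rate {d n : ℕ} (A : (Fin d → Fin n) → Bool) (i : Fin d) (j : Fin n) : ℕ :=
  (Finset.univ.filter (fun α : Fin d → Fin n => A α = true ∧ α i = j)).card

/-- The profile of `A`: the multiset of the rates of all its `d·n` hyperplanes. -/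
def profile {d n : ℕ} (A : (Fin d → Fin n) → Bool) : Multiset ℕ :=
  (Finset.univ : Finset (Fin d × Fin n)).val.map (fun p => rate A p.1 p.2)


theorem aux_identity {d n : ℕ} (L : Fin d → Fin n → ℝ) (k : (Fin d → Fin n) → ℝ) :
    ∑ i, ∑ j, L i j * hypSum k i j = ∑ α, k α * ∑ i, L i (α i) := by
  have h : ∀ i, ∑ j, L i j * hypSum k i j = ∑ α, k α * L i (α i) := by
    intro i
    unfold hypSum
    simp_rw [Finset.mul_sum, Finset.sum_filter]
    rw [Finset.sum_comm]
    refine Finset.sum_congr rfl fun α _ => ?_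
    rw [Finset.sum_ite_eq]
    simp [mul_comm]
  simp_rw [h, Finset.mul_sum]
  rw [Finset.sum_comm]

theorem hypSum_add {d n : ℕ} (k l : (Fin d → Fin n) → ℝ) (a b : ℝ) (i : Fin d) (j : Fin n) :
    hypSum (a • k + b • l) i j = a * hypSum k i j + b * hypSum l i j := by
  simp [hypSum, Finset.sum_add_distrib, Finset.mul_sum]

theorem dual_cover {d n : ℕ} (A : (Fin d → Fin n) → Bool) (W : ℝ)
    (hmax : ∀ k' W', IsPolyplex A k' W' → W' ≤ W) :
    ∃ L, IsCover A L ∧ coverWeight L ≤ W := by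
  classical
  let C : Set ((Fin d → Fin n → ℝ) × ℝ) := {x | ∃ k : (Fin d → Fin n) → ℝ,
    (∀ α, 0 ≤ k α) ∧ (∀ α, A α = false → k α = 0) ∧
    (∀ i j, hypSum k i j ≤ x.1 i j) ∧ x.2 ≤ ∑ α, k α}
  let D : Set ((Fin d → Fin n → ℝ) × ℝ) := {x | (∀ i j, x.1 i j < 1) ∧ W < x.2}
  have hCcomb : ∀ x ∈ C, ∀ y ∈ C, ∀ a b : ℝ, 0 ≤ a → 0 ≤ b → a • x + b • y ∈ C := by
    rintro x ⟨k, h1, h2, h3, h4⟩ y ⟨l, g1, g2, g3, g4⟩ a b ha hb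
    refine ⟨a • k + b • l, fun α => ?_, fun α hα => ?_, fun i j => ?_, ?_⟩
    · exact add_nonneg (mul_nonneg ha (h1 α)) (mul_nonneg hb (g1 α))
    · simp [h2 α hα, g2 α hα]
    · rw [hypSum_add]
      exact add_le_add (mul_le_mul_of_nonneg_left (h3 i j) ha)
        (mul_le_mul_of_nonneg_left (g3 i j) hb)
    · simp only [Pi.add_apply, Pi.smul_apply, smul_eq_mul, Finset.sum_add_distrib,
        ← Finset.mul_sum]
      exact add_le_add (mul_le_mul_of_nonneg_left h4 ha) (mul_le_mul_of_nonneg_left g4 hb)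
  have hCconv : Convex ℝ C := fun x hx y hy a b ha hb _ => hCcomb x hx y hy a b ha hb
  have hDopen : IsOpen D := by
    have : D = (⋂ i, ⋂ j, {x | x.1 i j < 1}) ∩ {x | W < x.2} := by
      ext x; simp [D]
    rw [this]
    refine IsOpen.inter (isOpen_iInter_of_finite fun i => isOpen_iInter_of_finite fun j => ?_) ?_
    · exact isOpen_lt (by fun_prop) (by fun_prop)
    · exact isOpen_lt (by fun_prop) (by fun_prop)
  have hDconv : Convex ℝ D := by
    rintro x ⟨hx1, hx2⟩ y ⟨hy1, hy2⟩ a b ha hb hab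
    refine ⟨fun i j => ?_, ?_⟩
    · exact (convex_Iio (1 : ℝ)) (hx1 i j) (hy1 i j) ha hb hab
    · exact (convex_Ioi W) hx2 hy2 ha hb hab
  have hdisj : Disjoint D C := by
    rw [Set.disjoint_left]
    rintro x ⟨hx1, hx2⟩ ⟨k, h1, h2, h3, h4⟩
    have := hmax k _ ⟨h1, h2, fun i j => (h3 i j).trans (hx1 i j).le, rfl⟩
    linarith
  obtain ⟨f, u, hfD, hfC⟩ := geometric_hahn_banach_open hDconv hDopen hCconv hdisj
  have h0C : (0 : (Fin d → Fin n → ℝ) × ℝ) ∈ C :=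
    ⟨0, by simp, by simp, by simp [hypSum], by simp⟩
  have hu : u ≤ 0 := by simpa using hfC 0 h0C
  have hpos : ∀ x ∈ C, 0 ≤ f x := by
    intro x hx
    by_contra! hneg
    have h1 := hfC _ (hCcomb x hx x hx ((u - 1) / f x) 0
      (div_nonneg_of_nonpos (by linarith) hneg.le) le_rfl)
    simp only [zero_smul, add_zero, map_smul, smul_eq_mul] at h1
    rw [div_mul_cancel₀ _ hneg.ne] at h1
    linarith
  obtain ⟨y, hy⟩ : ∃ y : Fin d → Fin n → ℝ,
      y = fun i j => f (Pi.single i (Pi.single j 1), 0) := ⟨_, rfl⟩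
  obtain ⟨t, ht⟩ : ∃ t : ℝ, t = - f (0, 1) := ⟨_, rfl⟩
  have hf : ∀ b w, f (b, w) = ∑ i, ∑ j, y i j * b i j - t * w := by
    intro b w
    have e : ((b, w) : (Fin d → Fin n → ℝ) × ℝ) =
        ∑ i, ∑ j, b i j • ((Pi.single i (Pi.single j 1), 0) : (Fin d → Fin n → ℝ) × ℝ)
          + w • ((0, 1) : (Fin d → Fin n → ℝ) × ℝ) := by
      refine Prod.ext ?_ ?_
      · funext i j
        simp [Prod.fst_sum, Finset.sum_apply, Pi.single_apply, ite_apply]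
      · simp [Prod.snd_sum]
    rw [e]
    simp only [map_add, map_sum, map_smul, smul_eq_mul, hy, ht]
    simp only [mul_comm]
    ring
  have hy0 : ∀ i j, 0 ≤ y i j := by
    intro i j
    rw [hy]
    refine hpos _ ⟨0, by simp, by simp, fun i' j' => ?_, by simp⟩
    simp only [hypSum, Pi.zero_apply, Finset.sum_const_zero, Pi.single_apply]
    split_ifs with h
    · simp only [Pi.single_apply]; split_ifs <;> simp
    · simp
  have ht0 : 0 ≤ t := by
    have := hpos (0, -1) ⟨0, by simp, by simp, by simp [hypSum], by simp⟩
    rw [hf] at this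
    simpa using this
  have hcov : ∀ α, A α = true → t ≤ ∑ i, y i (α i) := by
    intro α hα
    have := hpos (hypSum (Pi.single α 1), 1) ⟨Pi.single α 1, fun β => ?_, fun β hβ => ?_,
      fun i j => le_rfl, by simp⟩
    · rw [hf, aux_identity] at this
      simp [Pi.single_apply] at this
      exact this
    · simp only [Pi.single_apply]; split_ifs <;> simp
    · have : β ≠ α := by rintro rfl; simp [hα] at hβ
      simp [this]
  have hS : 0 ≤ ∑ i, ∑ j, y i j := Finset.sum_nonneg fun i _ => Finset.sum_nonneg fun j _ => hy0 i j
  have hD : ∀ ε : ℝ, 0 < ε → (∑ i, ∑ j, y i j) * (1 - ε) - t * (W + ε) < 0 := by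
    intro ε hε
    have := hfD ((fun _ _ => 1 - ε), W + ε) ⟨fun _ _ => by simpa using hε, by simpa using hε⟩
    rw [hf] at this
    simp only [← Finset.sum_mul] at this
    linarith
  have htpos : 0 < t := by
    rcases ht0.lt_or_eq with h | h
    · exact h
    · have := hD 1 one_pos
      rw [← h] at this
      simp at this
  have hW : ∑ i, ∑ j, y i j ≤ t * W := by
    by_contra! hlt
    set S := ∑ i, ∑ j, y i j
    have hQ : 0 < S + t + 1 := by linarith
    have hP : 0 < S - t * W := by linarith
    have h1 := hD ((S - t * W) / (S + t + 1)) (div_pos hP hQ)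
    have h2 : (S - t * W) / (S + t + 1) * (S + t + 1) = S - t * W := div_mul_cancel₀ _ hQ.ne'
    have h3 := div_pos hP hQ
    nlinarith
  refine ⟨fun i j => y i j / t, ⟨fun i j => div_nonneg (hy0 i j) ht0, fun α hα => ?_⟩, ?_⟩
  · rw [← Finset.sum_div, le_div_iff₀ htpos, one_mul]
    exact hcov α hα
  · unfold coverWeight
    simp only [← Finset.sum_div]
    rw [div_le_iff₀ htpos]
    linarith

/-- Complementary slackness between an optimal hyperplane cover and an optimal polyplex. -/
theorem stmt_0 {d n : ℕ} (A : (Fin d → Fin n) → Bool) (Λ : Fin d → Fin n → ℝ)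
    (k : (Fin d → Fin n) → ℝ) (W : ℝ)
    (hΛ : IsOptimalCover A Λ) (hk : IsPolyplex A k W)
    (hmax : IsGreatest {W' | ∃ k', IsPolyplex A k' W'} W) :
    (∀ α, 0 < k α → ∑ i, Λ i (α i) = 1) ∧
    (∀ i j, 0 < Λ i j → hypSum k i j = 1) := by
  obtain ⟨L, hL, hLW⟩ := dual_cover A W fun k' W' h => hmax.2 ⟨k', h⟩
  have hle : coverWeight Λ ≤ W := (hΛ.2 L hL).trans hLW
  obtain ⟨⟨hΛ0, hΛc⟩, -⟩ := hΛ
  obtain ⟨hk0, hkA, hk1, hkW⟩ := hk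
  have hid := aux_identity Λ k
  have t1 : ∀ α ∈ Finset.univ, k α ≤ k α * ∑ i, Λ i (α i) := by
    intro α _
    cases hα : A α
    · simp [hkA α hα]
    · exact le_mul_of_one_le_right (hk0 α) (hΛc α hα)
  have t2 : ∀ i j, Λ i j * hypSum k i j ≤ Λ i j :=
    fun i j => mul_le_of_le_one_right (hΛ0 i j) (hk1 i j)
  have t3 : ∀ i ∈ Finset.univ, ∑ j, Λ i j * hypSum k i j ≤ ∑ j, Λ i j :=
    fun i _ => Finset.sum_le_sum fun j _ => t2 i j
  have s1 := Finset.sum_le_sum t1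
  have s2 := Finset.sum_le_sum t3
  unfold coverWeight at hle
  have e1 := (Finset.sum_eq_sum_iff_of_le t1).1 (by linarith)
  have e2 := (Finset.sum_eq_sum_iff_of_le t3).1 (by linarith)
  constructor
  · intro α hα
    have := e1 α (Finset.mem_univ _)
    exact mul_left_cancel₀ hα.ne' (by linarith)
  · intro i j hij
    have := (Finset.sum_eq_sum_iff_of_le fun j _ => t2 i j).1 (e2 i (Finset.mem_univ _)) j
      (Finset.mem_univ _)
    exact mul_left_cancel₀ hij.ne' (by linarith)
end

section
/- If A is a d-dimensional extremal (0,1)-matrix of order n and Λ = (λ_{i,j}) is an optimal hyperplane cover of A, then A = A(Λ), i.e., for every index α one has A(α) = 1 if and only if Σ_{i ∈ Fin d} λ_{i, α_i} ≥ 1. In particular, every extremal matrix is a threshold matrix. -/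
open Finset

/-- The hyperplane sums as a linear map. -/
def hypLin (d n : ℕ) : ((Fin d → Fin n) → ℝ) →ₗ[ℝ] (Fin d → Fin n → ℝ) where
  toFun k := fun i j => hypSum k i j
  map_add' k l := by
    funext i j
    simp [hypSum, Finset.sum_add_distrib]
  map_smul' c k := by
    funext i j
    simp [hypSum, Finset.mul_sum]

lemma sum_hypSum_mul {d n : ℕ} (k : (Fin d → Fin n) → ℝ) (Λ : Fin d → Fin n → ℝ) :
    ∑ i, ∑ j, hypSum k i j * Λ i j = ∑ α, k α * ∑ i, Λ i (α i) := by
  simp_rw [Finset.mul_sum]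
  rw [Finset.sum_comm (s := (Finset.univ : Finset (Fin d → Fin n)))]
  refine Finset.sum_congr rfl fun i _ => ?_
  rw [← Finset.sum_fiberwise (s := (Finset.univ : Finset (Fin d → Fin n))) (g := fun α => α i)]
  refine Finset.sum_congr rfl fun j _ => ?_
  rw [hypSum, Finset.sum_mul]
  refine Finset.sum_congr rfl fun α hα => ?_
  rw [(Finset.mem_filter.1 hα).2]

lemma sum_hypSum {d n : ℕ} (k : (Fin d → Fin n) → ℝ) (i : Fin d) :
    ∑ j, hypSum k i j = ∑ α, k α := by
  rw [← Finset.sum_fiberwise (s := (Finset.univ : Finset (Fin d → Fin n))) (g := fun α => α i)]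
  rfl

lemma functional_apply {d n : ℕ} (g : (Fin d → Fin n → ℝ) →L[ℝ] ℝ) (x : Fin d → Fin n → ℝ) :
    g x = ∑ i, ∑ j, x i j * g (Pi.single i (Pi.single j 1)) := by
  have hx : x = ∑ i, ∑ j, x i j • (Pi.single i (Pi.single j 1) : Fin d → Fin n → ℝ) := by
    funext a b
    simp [Finset.sum_apply, Pi.single_apply, ite_apply]
  conv_lhs => rw [hx]
  simp [map_sum]

lemma exists_small_cover {d n : ℕ} (A : (Fin d → Fin n) → Bool) (h : ¬ HasPolydiagonal A) :
    0 < d ∧ ∃ Λ, IsCover A Λ ∧ coverWeight Λ < n := by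
  have hd : 0 < d := by
    rcases Nat.eq_zero_or_pos d with rfl | h0
    · exact absurd ⟨0, by simp, by simp, fun i => i.elim0⟩ h
    · exact h0
  have hn : 0 < n := by
    rcases Nat.eq_zero_or_pos n with rfl | h0
    · exact absurd ⟨0, by simp, by simp, fun _ j => j.elim0⟩ h
    · exact h0
  refine ⟨hd, ?_⟩
  have hdR : (0 : ℝ) < d := by exact_mod_cast hd
  have hnR : (0 : ℝ) < n := by exact_mod_cast hn
  let K : Set ((Fin d → Fin n) → ℝ) :=
    stdSimplex ℝ (Fin d → Fin n) ∩ {k | ∀ α, A α = false → k α = 0}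
  have hKc : IsCompact K := by
    refine (isCompact_stdSimplex ℝ (Fin d → Fin n)).inter_right ?_
    simp only [Set.ofPred_forall]
    refine isClosed_iInter fun α => isClosed_iInter fun _ => ?_
    exact isClosed_eq (continuous_apply α) continuous_const
  have hKv : Convex ℝ K := by
    refine (convex_stdSimplex ℝ (Fin d → Fin n)).inter ?_
    intro x hx y hy a b _ _ _ α hα
    simp [hx α hα, hy α hα]
  have hcont : Continuous (hypLin d n) := LinearMap.continuous_of_finiteDimensional _
  have hnot : (fun _ _ => (n : ℝ)⁻¹ : Fin d → Fin n → ℝ) ∉ Set.image (hypLin d n) K := by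
    rintro ⟨k, ⟨hk1, hk2⟩, hk3⟩
    refine h ⟨(n : ℝ) • k, fun α => mul_nonneg hnR.le (hk1.1 α), fun α hα => ?_, fun i j => ?_⟩
    · simp [hk2 α hα]
    · have h1 : hypLin d n ((n : ℝ) • k) i j = 1 := by
        rw [map_smul, hk3]
        simp [hnR.ne']
      exact h1
  obtain ⟨g, u, hg1, hg2⟩ := geometric_hahn_banach_point_closed
    (hKv.linear_image (hypLin d n)) (hKc.image hcont).isClosed hnot
  let y : Fin d → Fin n → ℝ := fun i j => g (Pi.single i (Pi.single j 1))
  have hy1 : ∑ i, ∑ j, y i j < n * u := by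
    rw [functional_apply] at hg1
    simp_rw [← Finset.mul_sum] at hg1
    rw [inv_mul_lt_iff₀ hnR] at hg1
    exact hg1
  have hy2 : ∀ α, A α = true → u < ∑ i, y i (α i) := by
    intro α hα
    have := hg2 (hypLin d n (Pi.single α 1)) ⟨_, ⟨single_mem_stdSimplex ℝ α, ?_⟩, rfl⟩
    · rw [functional_apply] at this
      have e := sum_hypSum_mul (Pi.single α (1 : ℝ)) y
      have e2 : ∑ β, (Pi.single α (1 : ℝ) : (Fin d → Fin n) → ℝ) β * ∑ i, y i (β i)
          = ∑ i, y i (α i) := by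
        simp [Pi.single_apply]
      rw [← e2, ← e]
      exact this
    · intro β hβ
      have : β ≠ α := by
        rintro rfl
        simp [hα] at hβ
      simp [this]
  -- a small perturbation of the uniform cover
  obtain ⟨M, hM0, hM⟩ : ∃ M : ℝ, 0 < M ∧ ∀ i j, |y i j - u / d| ≤ M := by
    refine ⟨1 + ∑ i, ∑ j, |y i j - u / d|, by positivity, fun i j => ?_⟩
    have h1 : |y i j - u / d| ≤ ∑ j, |y i j - u / d| :=
      Finset.single_le_sum (f := fun j => |y i j - u / d|) (fun _ _ => abs_nonneg _)
        (Finset.mem_univ j)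
    have h2 : ∑ j, |y i j - u / d| ≤ ∑ i, ∑ j, |y i j - u / d| :=
      Finset.single_le_sum (f := fun i => ∑ j, |y i j - u / d|)
        (fun _ _ => Finset.sum_nonneg fun _ _ => abs_nonneg _) (Finset.mem_univ i)
    linarith
  let ε : ℝ := 1 / (d * M)
  have hε : 0 < ε := by positivity
  refine ⟨fun i j => 1 / d + ε * (y i j - u / d), ⟨fun i j => ?_, fun α hα => ?_⟩, ?_⟩
  · have h1 := (abs_le.1 (hM i j)).1
    have h2 : ε * (-M) ≤ ε * (y i j - u / d) := mul_le_mul_of_nonneg_left h1 hε.le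
    have h3 : ε * (-M) = -(1 / d) := by
      simp only [ε]
      field_simp
    linarith
  · have e : ∑ i, (1 / (d : ℝ) + ε * (y i (α i) - u / d)) = 1 + ε * (∑ i, y i (α i) - u) := by
      rw [Finset.sum_add_distrib, ← Finset.mul_sum, Finset.sum_sub_distrib]
      simp only [Finset.sum_const, Finset.card_univ, Fintype.card_fin, nsmul_eq_mul]
      field_simp
    rw [e]
    have := mul_pos hε (sub_pos.2 (hy2 α hα))
    linarith
  · have e : coverWeight (fun i j => 1 / (d : ℝ) + ε * (y i j - u / d))
        = n + ε * (∑ i, ∑ j, y i j - n * u) := by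
      simp only [coverWeight, Finset.sum_add_distrib, ← Finset.mul_sum, Finset.sum_sub_distrib,
        Finset.sum_const, Finset.card_univ, Fintype.card_fin, nsmul_eq_mul]
      field_simp
    rw [e]
    have := mul_pos hε (sub_pos.2 hy1)
    linarith

/-- If Λ is an optimal hyperplane cover of an extremal matrix A, then A = A(Λ);
in particular every extremal matrix is a threshold matrix. -/
theorem stmt_2 {d n : ℕ} (A : (Fin d → Fin n) → Bool) (Λ : Fin d → Fin n → ℝ)
    (hA : IsExtremal A) (hΛ : IsOptimalCover A Λ) :
    (∀ α, A α = true ↔ 1 ≤ ∑ i, Λ i (α i)) ∧ IsThreshold A := by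
  have main : ∀ α, A α = true ↔ 1 ≤ ∑ i, Λ i (α i) := by
    intro β
    refine ⟨hΛ.1.2 β, fun hβ => ?_⟩
    by_contra hf
    have hf' : A β = false := by simpa using hf
    obtain ⟨hd, Λ', hc, hw⟩ := exists_small_cover A hA.1
    obtain ⟨k, hk0, hk1, hk2⟩ := hA.2 β hf'
    have h1 := hΛ.2 Λ' hc
    have h2 : coverWeight Λ = ∑ α, k α * ∑ i, Λ i (α i) := by
      rw [← sum_hypSum_mul]
      simp [hk2, coverWeight]
    have h3 : ∑ α, k α = n := by
      rw [← sum_hypSum k ⟨0, hd⟩]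
      simp [hk2]
    have h4 : ∑ α, k α ≤ ∑ α, k α * ∑ i, Λ i (α i) := by
      refine Finset.sum_le_sum fun α _ => ?_
      by_cases hαβ : α = β
      · subst hαβ
        exact le_mul_of_one_le_right (hk0 α) hβ
      · by_cases hα : A α = true
        · exact le_mul_of_one_le_right (hk0 α) (hΛ.1.2 α hα)
        · have : k α = 0 := hk1 α (by simpa [addEntry, hαβ] using hα)
          simp [this]
    linarith
  exact ⟨main, Λ, hΛ.1.1, main⟩
end

section
/- If A is a d-dimensional extremal (0,1)-matrix of order 2 and Λ = (λ_{i,j}) is an optimal hyperplane cover of A, then for every direction i ∈ Fin d at least one of the two weights λ_{i,0} and λ_{i,1} of the two parallel hyperplanes of direction i equals 0. -/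
open Finset

/-- The vertex of the cube `{0,1}^d` corresponding to an index. -/
noncomputable def vtx {d : ℕ} (α : Fin d → Fin 2) : Fin d → ℝ := fun i => if α i = 1 then 1 else 0

lemma vtx_injective {d : ℕ} : Function.Injective (vtx (d := d)) := by
  intro α β h
  funext i
  have h' := congrFun h i
  unfold vtx at h'
  generalize α i = a at *
  generalize β i = b at *
  fin_cases a <;> fin_cases b <;> simp_all

lemma hypSum_total {d : ℕ} (k : (Fin d → Fin 2) → ℝ) (i : Fin d) :
    hypSum k i 0 + hypSum k i 1 = ∑ α, k α := by
  unfold hypSum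
  rw [← Finset.sum_filter_add_sum_filter_not Finset.univ (fun α : Fin d → Fin 2 => α i = 0)]
  congr 1
  apply Finset.sum_congr _ (fun _ _ => rfl)
  ext α
  simp only [Finset.mem_filter, Finset.mem_univ, true_and]
  generalize α i = a
  fin_cases a <;> simp

lemma polydiag_of_mem {d : ℕ} (A : (Fin d → Fin 2) → Bool)
    (h : (fun _ => 1 / 2 : Fin d → ℝ) ∈ convexHull ℝ
      (((Finset.univ.filter (fun α => A α = true)).image vtx : Finset (Fin d → ℝ)) :
        Set (Fin d → ℝ))) : HasPolydiagonal A := by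
  classical
  rw [Finset.mem_convexHull'] at h
  obtain ⟨w, hw0, hw1, hw⟩ := h
  rw [Finset.sum_image (fun a _ b _ hab => vtx_injective hab)] at hw1 hw
  set k : (Fin d → Fin 2) → ℝ := fun α => if A α = true then 2 * w (vtx α) else 0 with hk
  have htot : ∑ α, k α = 2 := by
    rw [hk, ← Finset.sum_filter, ← Finset.mul_sum, hw1]; norm_num
  have hone : ∀ i, hypSum k i 1 = 1 := by
    intro i
    have := congrFun hw i
    rw [Finset.sum_apply, Finset.sum_filter] at this
    unfold hypSum
    rw [Finset.sum_filter]
    have e : ∀ α : Fin d → Fin 2, (if α i = 1 then k α else 0) =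
        2 * (if A α = true then (w (vtx α) • vtx α) i else 0) := by
      intro α
      simp only [hk, vtx, Pi.smul_apply, smul_eq_mul]
      split_ifs <;> simp
    rw [Finset.sum_congr rfl (fun α _ => e α), ← Finset.mul_sum, this]
    norm_num
  refine ⟨k, ?_, ?_, ?_⟩
  · intro α
    simp only [hk]
    split_ifs with hα
    · have := hw0 (vtx α) (Finset.mem_image_of_mem _ (by simpa using hα))
      linarith
    · exact le_rfl
  · intro α hα
    simp [hk, hα]
  · intro i j
    have h1 := hone i
    have h2 := hypSum_total k i
    fin_cases j
    · show hypSum k i 0 = 1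
      linarith
    · exact h1

lemma exists_light_cover {d : ℕ} (A : (Fin d → Fin 2) → Bool) (h : ¬ HasPolydiagonal A) :
    ∃ Λ, IsCover A Λ ∧ coverWeight Λ < 2 := by
  classical
  have hn := mt (polydiag_of_mem A) h
  obtain ⟨f, u, hu, hf⟩ := geometric_hahn_banach_point_closed (convex_convexHull ℝ _)
    ((Finset.finite_toSet _).isCompact_convexHull ℝ).isClosed hn
  set g : Fin d → ℝ := fun i => f (Pi.single i 1) with hg
  have hfg : ∀ x : Fin d → ℝ, f x = ∑ i, g i * x i := by
    intro x
    conv_lhs => rw [← Finset.univ_sum_single x]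
    rw [map_sum]
    refine Finset.sum_congr rfl fun i _ => ?_
    have : (Pi.single i (x i) : Fin d → ℝ) = x i • Pi.single i 1 := by
      rw [← Pi.single_smul]; simp
    rw [this, map_smul, smul_eq_mul, mul_comm]
  set C : ℝ := ∑ i, |g i| / 2 with hC
  have hC0 : 0 ≤ C := Finset.sum_nonneg fun i _ => by positivity
  set δ : ℝ := u - f (fun _ => 1 / 2) with hδ
  have hδ0 : 0 < δ := by linarith
  have hpos : 0 < C + δ := by linarith
  refine ⟨fun i j => (g i * ((if j = 1 then 1 else 0) - 1 / 2) + |g i| / 2) / (C + δ),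
    ⟨?_, ?_⟩, ?_⟩
  · intro i j
    apply div_nonneg _ hpos.le
    have := neg_abs_le (g i)
    have := le_abs_self (g i)
    split_ifs <;> linarith
  · intro α hα
    have h1 := hf (vtx α) (subset_convexHull ℝ _
      (Finset.mem_coe.2 (Finset.mem_image_of_mem _ (by simpa using hα))))
    rw [← Finset.sum_div, le_div_iff₀ hpos, Finset.sum_add_distrib]
    have h2 : ∑ i, g i * ((if α i = 1 then 1 else 0) - 1 / 2) = f (vtx α) - f (fun _ => 1 / 2) := by
      rw [hfg, hfg, ← Finset.sum_sub_distrib]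
      exact Finset.sum_congr rfl fun i _ => by simp only [vtx]; ring
    rw [h2]
    linarith
  · have : coverWeight (fun (i : Fin d) (j : Fin 2) =>
        (g i * ((if j = 1 then 1 else 0) - 1 / 2) + |g i| / 2) / (C + δ)) = 2 * C / (C + δ) := by
      unfold coverWeight
      rw [hC, Finset.mul_sum, Finset.sum_div]
      refine Finset.sum_congr rfl fun i _ => ?_
      rw [Fin.sum_univ_two]
      simp only [zero_ne_one, if_true, if_false]
      ring
    rw [this, div_lt_iff₀ hpos]
    linarith

/-- In an optimal hyperplane cover of an extremal matrix of order 2, one of the two parallel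
hyperplanes of each direction has weight 0. -/
theorem stmt_3 {d : ℕ} (A : (Fin d → Fin 2) → Bool) (Λ : Fin d → Fin 2 → ℝ)
    (hA : IsExtremal A) (hΛ : IsOptimalCover A Λ) :
    ∀ i : Fin d, Λ i 0 = 0 ∨ Λ i 1 = 0 := by
  intro i
  by_contra hcon
  push Not at hcon
  obtain ⟨h0, h1⟩ := hcon
  obtain ⟨⟨hnn, hcov⟩, hopt⟩ := hΛ
  have p0 : 0 < Λ i 0 := lt_of_le_of_ne (hnn i 0) (Ne.symm h0)
  have p1 : 0 < Λ i 1 := lt_of_le_of_ne (hnn i 1) (Ne.symm h1)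
  obtain ⟨M, hM, hM2⟩ := exists_light_cover A hA.1
  have hW : coverWeight Λ < 2 := lt_of_le_of_lt (hopt M hM) hM2
  obtain ⟨ε, e0, e1, e2, e3⟩ : ∃ ε : ℝ, 0 < ε ∧ ε ≤ Λ i 0 ∧ ε ≤ Λ i 1 ∧ ε < 1 := by
    refine ⟨min (min (Λ i 0) (Λ i 1)) (1 / 2), by positivity, ?_, ?_, ?_⟩
    · exact (min_le_left _ _).trans (min_le_left _ _)
    · exact (min_le_left _ _).trans (min_le_right _ _)
    · exact lt_of_le_of_lt (min_le_right _ _) (by norm_num)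
  have e4 : 0 < 1 - ε := by linarith
  have key := hopt (fun a j => (Λ a j - if a = i then ε else 0) / (1 - ε)) ⟨?_, ?_⟩
  · have : coverWeight (fun a j => (Λ a j - if a = i then ε else 0) / (1 - ε))
        = (coverWeight Λ - 2 * ε) / (1 - ε) := by
      unfold coverWeight
      simp only [← Finset.sum_div, Finset.sum_sub_distrib]
      simp
    rw [this, le_div_iff₀ e4] at key
    nlinarith
  · intro a j
    apply div_nonneg _ e4.le
    split_ifs with ha
    · subst ha
      fin_cases j
      · exact sub_nonneg.2 e1
      · exact sub_nonneg.2 e2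
    · simpa using hnn a j
  · intro α hα
    have := hcov α hα
    rw [← Finset.sum_div, le_div_iff₀ e4, Finset.sum_sub_distrib]
    simp
    linarith
end

section
/- For all integers d ≥ 2 and n ≥ 1, the number of equivalence classes of d-dimensional threshold (0,1)-matrices of order n is at most n^{n·d·(d−1)} + 1. -/
open Finset

lemma rate_lt {d n : ℕ} (A : (Fin d → Fin n) → Bool) (i : Fin d) (j : Fin n) :
    rate A i j < n ^ (d - 1) + 1 := by
  have h : Fintype.card ({k : Fin d // k ≠ i} → Fin n) = n ^ (d - 1) := by
    simp [Fintype.card_subtype_compl]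
  rw [← h, Nat.lt_succ_iff, ← Finset.card_univ]
  unfold rate
  refine Finset.card_le_card_of_injOn (fun α k => α k.1) (by simp) ?_
  intro α hα β hβ hab
  simp only [coe_filter, mem_univ, true_and, Set.mem_ofPred_eq] at hα hβ
  funext k
  by_cases hk : k = i
  · subst hk; rw [hα.2, hβ.2]
  · exact congrFun hab ⟨k, hk⟩

/-- indicator -/
noncomputable def ind {d n : ℕ} (A : (Fin d → Fin n) → Bool) (α : Fin d → Fin n) : ℝ :=
  if A α = true then 1 else 0

lemma rate_cast {d n : ℕ} (A : (Fin d → Fin n) → Bool) (i : Fin d) (j : Fin n) :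
    (rate A i j : ℝ) = ∑ α, if α i = j then ind A α else 0 := by
  unfold rate ind
  rw [Finset.card_filter]
  push_cast
  refine Finset.sum_congr rfl fun α _ => ?_
  by_cases h1 : A α = true <;> by_cases h2 : α i = j <;> simp [h1, h2]

lemma sum_rate {d n : ℕ} (A : (Fin d → Fin n) → Bool) (i : Fin d) (w : Fin n → ℝ) :
    ∑ j, w j * (rate A i j : ℝ) = ∑ α, w (α i) * ind A α := by
  simp_rw [rate_cast, Finset.mul_sum]
  rw [Finset.sum_comm]
  refine Finset.sum_congr rfl fun α _ => ?_
  simp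

lemma sum_weight {d n : ℕ} (A : (Fin d → Fin n) → Bool) (L : Fin d → Fin n → ℝ) :
    ∑ i, ∑ j, L i j * (rate A i j : ℝ) = ∑ α, (∑ i, L i (α i)) * ind A α := by
  simp_rw [sum_rate, Finset.sum_mul]
  rw [Finset.sum_comm]

lemma le_of_rate {d n : ℕ} (hd : 2 ≤ d) (A B : (Fin d → Fin n) → Bool)
    (hA : IsThreshold A) (h : ∀ i j, rate A i j = rate B i j) (α : Fin d → Fin n)
    (hB : B α = true) : A α = true := by
  obtain ⟨L, -, hL⟩ := hA
  by_contra hc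
  have h1 : ∑ α, (∑ i, L i (α i)) * ind A α = ∑ α, (∑ i, L i (α i)) * ind B α := by
    rw [← sum_weight, ← sum_weight]; simp_rw [h]
  have h2 : ∑ α, ind A α = ∑ α, ind B α := by
    have e1 := sum_rate A ⟨0, by omega⟩ (fun _ => 1)
    have e2 := sum_rate B ⟨0, by omega⟩ (fun _ => 1)
    simp_rw [h] at e1
    rw [e2] at e1
    simpa using e1.symm
  have h3 : ∑ α, ((∑ i, L i (α i)) - 1) * (ind A α - ind B α) = 0 := by
    simp_rw [sub_mul, mul_sub, one_mul, Finset.sum_sub_distrib]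
    rw [h1, h2]; ring
  have h4 : ∀ α ∈ (univ : Finset (Fin d → Fin n)),
      0 ≤ ((∑ i, L i (α i)) - 1) * (ind A α - ind B α) := by
    intro α _
    have := hL α
    unfold ind
    by_cases a : A α = true
    · have := this.1 a
      by_cases b : B α = true <;> simp [a, b] <;> linarith
    · have := mt this.2 a
      by_cases b : B α = true <;> simp [a, b] <;> linarith
  have h5 := (Finset.sum_eq_zero_iff_of_nonneg h4).1 h3 α (mem_univ _)
  have h6 := mt (hL α).2 hc
  simp [ind, hc, hB] at h5
  linarith

lemma eq_of_rate {d n : ℕ} (hd : 2 ≤ d) (A B : (Fin d → Fin n) → Bool)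
    (hA : IsThreshold A) (hB : IsThreshold B) (h : ∀ i j, rate A i j = rate B i j) : A = B := by
  funext α
  rw [Bool.eq_iff_iff]
  exact ⟨le_of_rate hd B A hB (fun i j => (h i j).symm) α, le_of_rate hd A B hA h α⟩

lemma rate_perm {d n : ℕ} (A : (Fin d → Fin n) → Bool) (σ : Fin d → Equiv.Perm (Fin n))
    (i : Fin d) (j : Fin n) :
    rate (fun α => A (fun k => σ k (α k))) i j = rate A i (σ i j) := by
  unfold rate
  refine Finset.card_bij (fun α _ k => σ k (α k)) ?_ ?_ ?_
  · intro α hα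
    simp only [mem_filter, mem_univ, true_and] at hα ⊢
    exact ⟨hα.1, by rw [hα.2]⟩
  · intro α _ β _ hab
    funext k
    exact (σ k).injective (congrFun hab k)
  · intro β hβ
    simp only [mem_filter, mem_univ, true_and] at hβ
    refine ⟨fun k => (σ k).symm (β k), ?_, ?_⟩
    · simp [hβ.1, hβ.2]
    · simp

lemma exists_perm_of_map_eq {n : ℕ} {γ : Type*} [DecidableEq γ] (f g : Fin n → γ)
    (h : (univ : Finset (Fin n)).val.map f = (univ : Finset (Fin n)).val.map g) :
    ∃ σ : Equiv.Perm (Fin n), ∀ j, f j = g (σ j) := by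
  have h1 : ∀ c, Nonempty ({j // f j = c} ≃ {j // g j = c}) := by
    intro c
    refine ⟨Fintype.equivOfCardEq ?_⟩
    have h2 := congrArg (Multiset.count c) h
    rw [Multiset.count_map, Multiset.count_map] at h2
    rw [Fintype.card_subtype, Fintype.card_subtype, Finset.card_def, Finset.card_def]
    simpa only [Finset.filter_val, eq_comm] using h2
  have e := fun c => Classical.choice (h1 c)
  refine ⟨(Equiv.sigmaFiberEquiv f).symm.trans
    ((Equiv.sigmaCongrRight e).trans (Equiv.sigmaFiberEquiv g)), fun j => ?_⟩
  exact (e (f j) ⟨j, rfl⟩).2.symm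

/-- row profile -/
def rowProfile {d n : ℕ} (A : (Fin d → Fin n) → Bool) (i : Fin d) :
    Sym (Fin (n ^ (d - 1) + 1)) n :=
  Sym.mk ((univ : Finset (Fin n)).val.map (fun j => ⟨rate A i j, rate_lt A i j⟩)) (by simp)

lemma equiv_of_rowProfile {d n : ℕ} (hd : 2 ≤ d) (A B : (Fin d → Fin n) → Bool)
    (hA : IsThreshold A) (hB : IsThreshold B) (h : rowProfile A = rowProfile B) :
    MatEquiv A B := by
  have h1 : ∀ i, ∃ σ : Equiv.Perm (Fin n), ∀ j, rate B i j = rate A i (σ j) := by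
    intro i
    have h2 := congrArg Subtype.val (congrFun h i).symm
    obtain ⟨σ, hσ⟩ := exists_perm_of_map_eq _ _ h2
    refine ⟨σ, fun j => ?_⟩
    have := hσ j
    simpa using this
  choose σ hσ using h1
  refine ⟨1, σ, fun α => ?_⟩
  have hA' : IsThreshold (fun α => A (fun k => σ k (α k))) := by
    obtain ⟨L, hL0, hL⟩ := hA
    exact ⟨fun i j => L i (σ i j), fun i j => hL0 _ _, fun α => hL _⟩
  have := eq_of_rate hd _ B hA' hB (fun i j => by rw [rate_perm, hσ])
  rw [← this]; rfl

lemma choose_step (N n : ℕ) (hN : 2 ≤ N) (hn : 1 ≤ n) (h : (N + n).choose n ≤ N ^ n) :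
    (N + (n + 1)).choose (n + 1) ≤ N ^ (n + 1) := by
  have e := Nat.add_one_mul_choose_eq (N + n) n
  have h1 : N + n + 1 ≤ N * (n + 1) := by nlinarith
  have h2 : (N + (n + 1)).choose (n + 1) * (n + 1) ≤ N ^ (n + 1) * (n + 1) := by
    calc _ = (N + n + 1) * (N + n).choose n := e.symm
      _ ≤ (N * (n + 1)) * N ^ n := Nat.mul_le_mul h1 h
      _ = _ := by ring
  exact Nat.le_of_mul_le_mul_right h2 (by omega)

lemma choose_bound (N n m : ℕ) (hN : 2 ≤ N) (hm : 1 ≤ m) (h : (N + m).choose m ≤ N ^ m)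
    (hmn : m ≤ n) : (N + n).choose n ≤ N ^ n := by
  induction n, hmn using Nat.le_induction with
  | base => exact h
  | succ k hk ih => exact choose_step N k hN (by omega) ih

lemma choose_two_bound (N : ℕ) (hN : 4 ≤ N) : (N + 2).choose 2 ≤ N ^ 2 := by
  have e := Nat.add_one_mul_choose_eq (N + 1) 1
  simp only [Nat.choose_one_right] at e
  have : (N + 2).choose 2 * 2 = (N + 2) * (N + 1) := e.symm
  nlinarith

/-- The number of equivalence classes of d-dimensional threshold matrices of order n is at
most n^(n d (d-1)) + 1. -/
theorem stmt_6 (d n : ℕ) (hd : 2 ≤ d) (hn : 1 ≤ n) :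
    Nat.card (Quot (fun A B : {A : (Fin d → Fin n) → Bool // IsThreshold A} =>
      MatEquiv A.1 B.1)) ≤ n ^ (n * d * (d - 1)) + 1 := by
  have hout : ∀ q q' : Quot (fun A B : {A : (Fin d → Fin n) → Bool // IsThreshold A} =>
      MatEquiv A.1 B.1), MatEquiv q.out.1 q'.out.1 → q = q' := by
    intro q q' h
    rw [← Quot.out_eq q, ← Quot.out_eq q']
    exact Quot.sound h
  have triv : Nat.card (Quot (fun A B : {A : (Fin d → Fin n) → Bool // IsThreshold A} =>
      MatEquiv A.1 B.1)) ≤ 2 ^ (n ^ d) := by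
    have : Nat.card ((Fin d → Fin n) → Bool) = 2 ^ (n ^ d) := by simp
    rw [← this]
    refine Nat.card_le_card_of_injective (fun q => q.out.1) ?_
    intro q q' h
    have h' : q.out = q'.out := Subtype.ext h
    rw [← Quot.out_eq q, ← Quot.out_eq q', h']
  have main : Nat.card (Quot (fun A B : {A : (Fin d → Fin n) → Bool // IsThreshold A} =>
      MatEquiv A.1 B.1)) ≤ ((n ^ (d - 1) + n).choose n) ^ d := by
    have : Nat.card (Fin d → Sym (Fin (n ^ (d - 1) + 1)) n) =
        ((n ^ (d - 1) + n).choose n) ^ d := by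
      simp [Sym.card_sym_eq_choose, Nat.card_eq_fintype_card]
    rw [← this]
    refine Nat.card_le_card_of_injective (fun q => rowProfile q.out.1) ?_
    intro q q' h
    exact hout q q' (equiv_of_rowProfile hd _ _ q.out.2 q'.out.2 h)
  have key : (n ^ (d - 1) + n).choose n ≤ (n ^ (d - 1)) ^ n →
      Nat.card (Quot (fun A B : {A : (Fin d → Fin n) → Bool // IsThreshold A} =>
        MatEquiv A.1 B.1)) ≤ n ^ (n * d * (d - 1)) + 1 := by
    intro h
    have h1 := Nat.pow_le_pow_left h d
    have h2 : ((n ^ (d - 1)) ^ n) ^ d = n ^ (n * d * (d - 1)) := by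
      rw [← pow_mul, ← pow_mul]; congr 1; ring
    omega
  rcases Nat.lt_or_ge n 2 with h1 | h2
  · have : n = 1 := by omega
    subst this
    simpa using triv
  have hle : n ≤ n ^ (d - 1) := Nat.le_self_pow (by omega) n
  by_cases h4 : 4 ≤ n ^ (d - 1)
  · exact key (choose_bound _ n 2 (by omega) (by omega) (choose_two_bound _ h4) h2)
  · rcases Nat.lt_or_ge n 3 with h3 | h3
    · have : n = 2 := by omega
      subst this
      have hd2 : d = 2 := by
        by_contra hne
        have : 2 ^ 2 ≤ 2 ^ (d - 1) := Nat.pow_le_pow_right (by omega) (by omega)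
        omega
      subst hd2
      norm_num at triv ⊢
      omega
    · have hn3 : n = 3 := by omega
      have hN : n ^ (d - 1) = 3 := by omega
      apply key
      rw [hN, hn3]
      decide
end

section
/- There exist a dimension d, a d-dimensional extremal (0,1)-matrix A of order 2 with deficiency δ, and an optimal hyperplane cover Λ = (λ_{i,j}) of A such that some entry λ_{i,j} is not an integer multiple of δ (i.e., λ_{i,j}/δ ∉ ℤ). -/
open Finset

namespace Stmt9

/-- Doubled weights of the self-dual threshold function. -/
def c : Fin 9 → ℕ := ![8, 8, 12, 12, 22, 18, 3, 8, 3]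

/-- The extremal matrix. -/
def A (α : Fin 9 → Fin 2) : Bool := decide (48 ≤ ∑ i, c i * (α i : ℕ))

/-- The optimal cover. -/
noncomputable def L (i : Fin 9) (j : Fin 2) : ℝ := ((c i * (j : ℕ) : ℕ) : ℝ) / 48

/-- Support of the optimal polyplex. -/
def p : Fin 8 → Fin 9 → Fin 2 := ![![0, 0, 1, 0, 1, 0, 1, 1, 1],
  ![0, 0, 0, 0, 1, 1, 0, 1, 0],
  ![0, 1, 0, 0, 1, 1, 0, 0, 0],
  ![1, 0, 0, 0, 1, 1, 0, 0, 0],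
  ![1, 0, 0, 1, 1, 0, 1, 0, 1],
  ![1, 1, 1, 1, 0, 0, 0, 1, 0],
  ![0, 0, 1, 1, 0, 1, 1, 0, 1],
  ![1, 1, 0, 0, 0, 1, 1, 1, 1]]

/-- Weights of the optimal polyplex (times 24). -/
def y : Fin 8 → ℕ := ![6, 2, 8, 2, 6, 11, 7, 5]

/-- The optimal polyplex. -/
noncomputable def K (α : Fin 9 → Fin 2) : ℝ :=
  (((∑ t, if α = p t then y t else 0 : ℕ) : ℕ) : ℝ) / 24

/-- Exchange of summation: cover values summed against a weighting. -/
lemma sum_mul_cover {d n : ℕ} (k : (Fin d → Fin n) → ℝ) (Λ : Fin d → Fin n → ℝ) :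
    ∑ α, k α * ∑ i, Λ i (α i) = ∑ i, ∑ j, Λ i j * hypSum k i j := by
  simp_rw [Finset.mul_sum]
  rw [Finset.sum_comm]
  refine Finset.sum_congr rfl fun i _ => ?_
  simp_rw [hypSum, Finset.mul_sum, Finset.sum_filter]
  rw [Finset.sum_comm]
  refine Finset.sum_congr rfl fun α _ => ?_
  simp [mul_comm]

/-- Weak duality. -/
lemma weak_duality {d n : ℕ} {A : (Fin d → Fin n) → Bool} {k : (Fin d → Fin n) → ℝ} {W : ℝ}
    {Λ : Fin d → Fin n → ℝ} (hk : IsPolyplex A k W) (hΛ : IsCover A Λ) :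
    W ≤ coverWeight Λ := by
  obtain ⟨h0, hA, hs, rfl⟩ := hk
  obtain ⟨hn, hc⟩ := hΛ
  calc ∑ α, k α ≤ ∑ α, k α * ∑ i, Λ i (α i) := by
        refine Finset.sum_le_sum fun α _ => ?_
        cases h : A α with
        | false => simp [hA α h]
        | true => exact le_mul_of_one_le_right (h0 α) (hc α h)
    _ = ∑ i, ∑ j, Λ i j * hypSum k i j := sum_mul_cover k Λ
    _ ≤ coverWeight Λ := by
        refine Finset.sum_le_sum fun i _ => Finset.sum_le_sum fun j _ => ?_
        exact mul_le_of_le_one_right (hn i j) (hs i j)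

lemma L_sum (α : Fin 9 → Fin 2) :
    ∑ i, L i (α i) = ((∑ i, c i * (α i : ℕ) : ℕ) : ℝ) / 48 := by
  simp only [L, Nat.cast_sum, Finset.sum_div]

lemma L_cover : IsCover A L := by
  refine ⟨fun i j => by unfold L; positivity, fun α h => ?_⟩
  rw [L_sum]
  have h' : 48 ≤ ∑ i, c i * (α i : ℕ) := by simpa [A] using h
  have : (48 : ℝ) ≤ ((∑ i, c i * (α i : ℕ) : ℕ) : ℝ) := by exact_mod_cast h'
  linarith

lemma L_weight : coverWeight L = 2 - 1 / 24 := by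
  simp [coverWeight, L, c, Fin.sum_univ_succ]
  norm_num

lemma K_hyp_nat (i : Fin 9) (j : Fin 2) :
    (∑ t, if p t i = j then y t else 0) ≤ 24 := by
  revert i j
  decide

lemma K_sum (q : (Fin 9 → Fin 2) → Prop) [DecidablePred q] :
    ∑ α ∈ Finset.univ.filter q, K α = ((∑ t, if q (p t) then y t else 0 : ℕ) : ℝ) / 24 := by
  simp only [K]
  rw [← Finset.sum_div, ← Nat.cast_sum]
  congr 2
  rw [Finset.sum_comm]
  refine Finset.sum_congr rfl fun t _ => ?_
  rw [Finset.sum_ite_eq']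
  simp

lemma p_mem (t : Fin 8) : A (p t) = true := by
  revert t
  decide

lemma K_polyplex : IsPolyplex A K (2 - 1 / 24) := by
  refine ⟨fun α => by unfold K; positivity, fun α h => ?_, fun i j => ?_, ?_⟩
  · have : (∑ t, if α = p t then y t else 0) = 0 := by
      refine Finset.sum_eq_zero fun t _ => ?_
      rw [if_neg]
      rintro rfl
      simp [p_mem] at h
    simp [K, this]
  · rw [hypSum, K_sum (fun α => α i = j)]
    have : ((∑ t, if p t i = j then y t else 0 : ℕ) : ℝ) ≤ 24 := by exact_mod_cast K_hyp_nat i j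
    linarith
  · have h := K_sum (fun _ => True)
    have h2 : (∑ t, if True then y t else 0) = 47 := by decide
    rw [h2] at h
    rw [Finset.filter_true] at h
    rw [h]
    norm_num

/-- The opposite index. -/
def opp (α : Fin 9 → Fin 2) : Fin 9 → Fin 2 := fun i => 1 - α i

lemma opp_mem (α : Fin 9 → Fin 2) (h : A α = false) : A (opp α) = true := by
  have key : ∀ j : Fin 2, ((1 - j : Fin 2) : ℕ) = 1 - (j : ℕ) := by decide
  simp only [A, decide_eq_false_iff_not, decide_eq_true_eq, opp, key, Fin.sum_univ_succ, c] at h ⊢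
  simp at h ⊢
  omega

lemma extremal : IsExtremal A := by
  constructor
  · rintro ⟨k, h0, hA, hs⟩
    have h1 : IsPolyplex A k (∑ α, k α) := ⟨h0, hA, fun i j => (hs i j).le, rfl⟩
    have h2 := weak_duality h1 L_cover
    have h3 := sum_mul_cover k (fun _ _ => (1 / 9 : ℝ))
    simp [hs] at h3
    rw [L_weight] at h2
    linarith
  · intro β hβ
    have hne : ∀ j : Fin 2, 1 - j ≠ j := by decide
    have hcov : ∀ a b : Fin 2, a = b ∨ 1 - a = b := by decide
    have hb : β ≠ opp β := fun h => hne (β 0) (congrFun h 0).symm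
    refine ⟨fun α => (if α = β then 1 else 0) + (if α = opp β then 1 else 0),
      fun α => by positivity, fun α h => ?_, fun i j => ?_⟩
    · have h1 : α ≠ β := by rintro rfl; simp [addEntry] at h
      have h2 : α ≠ opp β := by
        rintro rfl
        simp [addEntry, opp_mem β hβ] at h
      simp [h1, h2]
    · rw [hypSum, Finset.sum_add_distrib, Finset.sum_ite_eq', Finset.sum_ite_eq']
      rcases hcov (β i) j with rfl | rfl
      · simp [opp, hne]
      · simp [opp, (hne (β i)).symm]

end Stmt9

/-- There is an extremal matrix of order 2 with deficiency δ having an optimal hyperplane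
cover some entry of which is not an integer multiple of δ. -/
theorem stmt_9 :
    ∃ (d : ℕ) (A : (Fin d → Fin 2) → Bool) (δ : ℝ) (Λ : Fin d → Fin 2 → ℝ),
      IsExtremal A ∧ IsGreatest {W | ∃ k, IsPolyplex A k W} (2 - δ) ∧
      IsOptimalCover A Λ ∧ ∃ i j, ¬ ∃ m : ℤ, Λ i j = (m : ℝ) * δ := by
  refine ⟨9, Stmt9.A, 1 / 24, Stmt9.L, Stmt9.extremal, ⟨⟨Stmt9.K, Stmt9.K_polyplex⟩, ?_⟩,
    ⟨Stmt9.L_cover, fun Λ' h => ?_⟩, 6, 1, ?_⟩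
  · rintro W ⟨k, hk⟩
    rw [← Stmt9.L_weight]
    exact Stmt9.weak_duality hk Stmt9.L_cover
  · rw [Stmt9.L_weight]
    exact Stmt9.weak_duality Stmt9.K_polyplex h
  · rintro ⟨m, hm⟩
    have h6 : Stmt9.L 6 1 = 3 / 48 := by simp [Stmt9.L, Stmt9.c]
    rw [h6] at hm
    have h : (3 : ℝ) = 2 * m := by linarith
    have h' : (3 : ℤ) = 2 * m := by exact_mod_cast h
    omega
end
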